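/- Let T₁, T₂ be non-crossing spanning trees on n points in convex position such that T₁ is a Hamiltonian path. Then there is a flip sequence between T₁ and T₂ of length at most (3/2) n. -/

import Mathlib

open Finset

/-- An edge (chord) on `n` points in convex position, as an unordered pair of indices. -/
abbrev Edge (n : ℕ) := Sym2 (Fin n)

/-- The cyclic successor of a point. -/
def next {n : ℕ} (i : Fin n) : Fin n := ⟨((i : ℕ) + 1) % n, Nat.mod_lt _ i.pos⟩


/-- Chords `{a,b}` (with `a<b`) and `{c,d}` (with `c<d`) cross iff
`a<c<b<d` or `c<a<d<b`. -/
def Cross {n : ℕ} (e f : Edge n) : Prop :=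
  ∃ a b c d : Fin n, e = s(a, b) ∧ f = s(c, d) ∧ a < b ∧ c < d ∧
    ((a < c ∧ c < b ∧ b < d) ∨ (c < a ∧ a < d ∧ d < b))

/-- A set of chords is non-crossing if no two of its chords cross. -/
def NonCrossing {n : ℕ} (E : Finset (Edge n)) : Prop :=
  ∀ e ∈ E, ∀ f ∈ E, ¬ Cross e f

/-- A border edge joins two cyclically consecutive points (this includes `{n-1, 0}`,
i.e. `{v_n, v_1}`, since addition in `Fin n` wraps around). -/
def IsBorder {n : ℕ} (e : Edge n) : Prop := ∃ i : Fin n, e = s(i, next i)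

/-- A spanning tree on the `n` points, given by its edge set: loopless, connected,
with `n - 1` edges. -/
def IsSpanningTree {n : ℕ} (T : Finset (Edge n)) : Prop :=
  (SimpleGraph.fromEdgeSet (T : Set (Edge n))).Connected ∧
    T.card = n - 1 ∧ ∀ e ∈ T, ¬ e.IsDiag

/-- A non-crossing spanning tree. -/
def NCST {n : ℕ} (T : Finset (Edge n)) : Prop := IsSpanningTree T ∧ NonCrossing T

/-- A flip removes one edge and adds another so that the result is again a
non-crossing spanning tree. -/
def Flip {n : ℕ} (T T' : Finset (Edge n)) : Prop :=
  NCST T ∧ NCST T' ∧ ∃ e ∈ T, ∃ f, f ∉ T ∧ T' = insert f (T.erase e)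

/-- A flip sequence of length `k` from `T₁` to `T₂`. -/
def FlipSeq {n : ℕ} (T₁ T₂ : Finset (Edge n)) (k : ℕ) : Prop :=
  ∃ f : ℕ → Finset (Edge n), f 0 = T₁ ∧ f k = T₂ ∧ ∀ i < k, Flip (f i) (f (i + 1))

/-- There is a flip sequence from `T₁` to `T₂` of length at most `m`. -/
def FlipDistLE {n : ℕ} (T₁ T₂ : Finset (Edge n)) (m : ℕ) : Prop :=
  ∃ k ≤ m, FlipSeq T₁ T₂ k

/-!
Flips are reversible, so transform `T₂` into the path, processing the points in path order. At the
current point `w`, as long as the tree has a forward edge `wv` that is not a path edge, delete it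
and let `c` be the last point that this separates from a later one. Then everything after `c` is
still linked, and any edge from `c` to a later point reconnects the tree. Such an edge can be
inserted without crossings: the path edge if `c = w`, and a border edge otherwise. An inserted edge
that is not a path edge is, when its point is reached, the only forward edge there that may need a
flip, because deleting it leaves everything later linked. So `w` costs at most `max d 1` flips,
where `d` is the number of forward edges of `T₂` at `w`.

The path can be traversed in both directions, and for `n ≥ 2` the two costs at `w` add up to at most
`deg w + 1`. The degrees in `T₂` sum to `2 (n - 1)`, so one direction needs at most `(3/2) n` flips.
-/

section Linked

variable {V : Type*} {E F : Finset (Sym2 V)} {a b c d u v w : V}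

/-- `u` and `v` lie in the same component of the graph with edge set `E`. -/
def Linked (E : Finset (Sym2 V)) (u v : V) : Prop :=
  (SimpleGraph.fromEdgeSet (E : Set (Sym2 V))).Reachable u v

lemma Linked.refl (E : Finset (Sym2 V)) (u : V) : Linked E u u :=
  SimpleGraph.Reachable.refl u

lemma Linked.symm (h : Linked E u v) : Linked E v u :=
  SimpleGraph.Reachable.symm h

lemma Linked.trans (huv : Linked E u v) (hvw : Linked E v w) : Linked E u w :=
  SimpleGraph.Reachable.trans huv hvw

lemma Linked.mono (hEF : E ⊆ F) (h : Linked E u v) : Linked F u v :=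
  SimpleGraph.Reachable.mono (SimpleGraph.fromEdgeSet_mono (coe_subset.2 hEF)) h

lemma Linked.of_mem (h : s(u, v) ∈ E) : Linked E u v := by
  by_cases huv : u = v
  · exact huv ▸ Linked.refl E u
  · exact SimpleGraph.Adj.reachable ((SimpleGraph.fromEdgeSet_adj _).2 ⟨mem_coe.2 h, huv⟩)

variable [DecidableEq V]

lemma Linked.of_insert (h : Linked (insert s(a, b) E) u v) :
    Linked E u v ∨ (Linked E u a ∧ Linked E b v) ∨ (Linked E u b ∧ Linked E a v) := by
  obtain ⟨p⟩ := h
  induction p with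
  | nil => exact Or.inl (Linked.refl _ _)
  | cons hadj _ ih =>
    rw [SimpleGraph.fromEdgeSet_adj, mem_coe, mem_insert] at hadj
    rcases hadj.1 with hab | hE
    · rcases Sym2.eq_iff.1 hab with ⟨rfl, rfl⟩ | ⟨rfl, rfl⟩
      · rcases ih with h | ⟨-, h⟩ | ⟨-, h⟩
        · exact Or.inr (Or.inl ⟨Linked.refl _ _, h⟩)
        · exact Or.inr (Or.inl ⟨Linked.refl _ _, h⟩)
        · exact Or.inl h
      · rcases ih with h | ⟨-, h⟩ | ⟨-, h⟩
        · exact Or.inr (Or.inr ⟨Linked.refl _ _, h⟩)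
        · exact Or.inl h
        · exact Or.inr (Or.inr ⟨Linked.refl _ _, h⟩)
    · exact ih.imp (Linked.of_mem hE).trans
        (Or.imp (And.imp_left (Linked.of_mem hE).trans) (And.imp_left (Linked.of_mem hE).trans))

lemma Linked.of_erase (h : Linked E u v) (a b : V) :
    Linked (E.erase s(a, b)) u v ∨
      (Linked (E.erase s(a, b)) u a ∧ Linked (E.erase s(a, b)) b v) ∨
      (Linked (E.erase s(a, b)) u b ∧ Linked (E.erase s(a, b)) a v) :=
  (h.mono (insert_erase_subset _ _)).of_insert

lemma Linked.exchange (hcd : Linked E c d) (hsep : ¬ Linked (E.erase s(a, b)) c d)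
    (huv : Linked E u v) : Linked (insert s(c, d) (E.erase s(a, b))) u v := by
  have hsub : E.erase s(a, b) ⊆ insert s(c, d) (E.erase s(a, b)) := subset_insert _ _
  have hnew : Linked (insert s(c, d) (E.erase s(a, b))) c d :=
    Linked.of_mem (mem_insert_self _ _)
  have hab : Linked (insert s(c, d) (E.erase s(a, b))) a b := by
    rcases hcd.of_erase a b with h | ⟨hca, hbd⟩ | ⟨hcb, had⟩
    · exact absurd h hsep
    · exact ((hca.mono hsub).symm.trans hnew).trans (hbd.mono hsub).symm
    · exact ((had.mono hsub).trans hnew.symm).trans (hcb.mono hsub)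
  rcases huv.of_erase a b with h | ⟨hua, hbv⟩ | ⟨hub, hav⟩
  · exact h.mono hsub
  · exact ((hua.mono hsub).trans hab).trans (hbv.mono hsub)
  · exact ((hub.mono hsub).trans hab.symm).trans (hav.mono hsub)

lemma Linked.erase_erase {e : Sym2 V} (hbridge : ¬ Linked (E.erase s(a, b)) a b)
    (he : Linked (E.erase e) u v) (hab : Linked (E.erase s(a, b)) u v) :
    Linked ((E.erase e).erase s(a, b)) u v := by
  have hsub : (E.erase e).erase s(a, b) ⊆ E.erase s(a, b) :=
    erase_subset_erase _ (erase_subset _ _)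
  rcases he.of_erase a b with h | ⟨hua, hbv⟩ | ⟨hub, hav⟩
  · exact h
  · exact absurd (((hua.mono hsub).symm.trans hab).trans (hbv.mono hsub).symm) hbridge
  · exact absurd (((hav.mono hsub).trans hab.symm).trans (hub.mono hsub)) hbridge

end Linked

lemma sum_degrees_add_two_of_isTree {V : Type*} [Fintype V] {G : SimpleGraph V}
    [DecidableRel G.Adj] (hG : G.IsTree) : ∑ v, G.degree v + 2 = 2 * Fintype.card V := by
  classical
  rw [SimpleGraph.sum_degrees_eq_twice_card_edges, ← hG.card_edgeFinset, mul_add_one]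

section SpanningTree

variable {n : ℕ} {T T' : Finset (Edge n)}

lemma IsSpanningTree.linked (hT : IsSpanningTree T) (u v : Fin n) : Linked T u v :=
  hT.1.preconnected u v

lemma IsSpanningTree.edgeSet (hT : IsSpanningTree T) :
    (SimpleGraph.fromEdgeSet (T : Set (Edge n))).edgeSet = T := by
  rw [SimpleGraph.edgeSet_fromEdgeSet, sdiff_eq_left, Set.disjoint_left]
  exact hT.2.2

lemma IsSpanningTree.card_add_one (hT : IsSpanningTree T) : T.card + 1 = n := by
  have := hT.1.nonempty
  have hn : 0 < n := Fin.pos (Classical.arbitrary (Fin n))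
  have := hT.2.1
  omega

lemma IsSpanningTree.isTree (hT : IsSpanningTree T) :
    (SimpleGraph.fromEdgeSet (T : Set (Edge n))).IsTree := by
  rw [SimpleGraph.isTree_iff_connected_and_card, hT.edgeSet]
  exact ⟨hT.1, by simpa using hT.card_add_one⟩

lemma IsSpanningTree.not_linked_erase (hT : IsSpanningTree T) {a b : Fin n}
    (hab : s(a, b) ∈ T) : ¬ Linked (T.erase s(a, b)) a b := by
  have hbridge := SimpleGraph.isAcyclic_iff_forall_isBridge.1 hT.isTree.isAcyclic
    (hT.edgeSet ▸ mem_coe.2 hab)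
  rwa [SimpleGraph.isBridge_iff, SimpleGraph.deleteEdges_fromEdgeSet, ← coe_erase]
    at hbridge

lemma IsSpanningTree.exchange (hT : IsSpanningTree T) {a b c d : Fin n} (hab : s(a, b) ∈ T)
    (hsep : ¬ Linked (T.erase s(a, b)) c d) :
    IsSpanningTree (insert s(c, d) (T.erase s(a, b))) := by
  have := hT.1.nonempty
  refine ⟨⟨fun u v => (hT.linked c d).exchange hsep (hT.linked u v)⟩, ?_, fun e he => ?_⟩
  · rw [card_insert_of_notMem fun h => hsep (Linked.of_mem h),
      card_erase_add_one hab, hT.2.1]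
  · rcases mem_insert.1 he with rfl | he
    · rw [Sym2.mk_isDiag_iff]
      rintro rfl
      exact hsep (Linked.refl _ _)
    · exact hT.2.2 e (mem_of_mem_erase he)

lemma IsSpanningTree.eq_of_subset (hT : IsSpanningTree T) (hT' : IsSpanningTree T')
    (h : T ⊆ T') : T = T' :=
  eq_of_subset_of_card_le h (hT'.2.1.trans hT.2.1.symm).le

lemma IsSpanningTree.forall_mem_of_lt {α : Type*} [LinearOrder α] (hT : IsSpanningTree T)
    (r : Fin n ≃ α) {P : Edge n → Prop} (h : ∀ u v, s(u, v) ∈ T → r u < r v → P s(u, v)) :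
    ∀ e ∈ T, P e := by
  refine fun e => Sym2.ind (fun u v huv => ?_) e
  rcases lt_trichotomy (r u) (r v) with hlt | heq | hlt
  · exact h u v huv hlt
  · exact absurd (r.injective heq) (hT.2.2 _ huv)
  · rw [Sym2.eq_swap] at huv ⊢
    exact h v u huv hlt

end SpanningTree

section Crossing

variable {n : ℕ} {u v a b : Fin n} {e f : Edge n}

lemma cross_iff : Cross s(u, v) s(a, b) ↔
    a ≠ u ∧ a ≠ v ∧ b ≠ u ∧ b ≠ v ∧ ¬ (a ∈ Set.uIoo u v ↔ b ∈ Set.uIoo u v) := by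
  simp only [Set.uIoo_eq_union, Set.mem_union, Set.mem_Ioo]
  constructor
  · rintro ⟨p, q, c, d, huv, hab, hpq, hcd, h⟩
    rcases Sym2.eq_iff.1 huv with ⟨rfl, rfl⟩ | ⟨rfl, rfl⟩ <;>
    rcases Sym2.eq_iff.1 hab with ⟨rfl, rfl⟩ | ⟨rfl, rfl⟩ <;>
    omega
  · intro h
    rcases lt_or_ge u v with huv | huv <;> rcases lt_or_ge a b with hab | hab
    · exact ⟨u, v, a, b, rfl, rfl, huv, hab, by omega⟩
    · exact ⟨u, v, b, a, rfl, Sym2.eq_swap, huv, by omega, by omega⟩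
    · exact ⟨v, u, a, b, Sym2.eq_swap, rfl, by omega, hab, by omega⟩
    · exact ⟨v, u, b, a, Sym2.eq_swap, Sym2.eq_swap, by omega, by omega, by omega⟩

lemma Cross.symm (h : Cross e f) : Cross f e := by
  obtain ⟨a, b, c, d, he, hf, hab, hcd, h⟩ := h
  exact ⟨c, d, a, b, hf, he, hcd, hab, h.symm⟩

lemma not_cross_self (e : Edge n) : ¬ Cross e e :=
  Sym2.ind (fun _ _ h => (cross_iff.1 h).1 rfl) e

lemma NonCrossing.insert_erase {E : Finset (Edge n)} (hE : NonCrossing E)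
    (hf : ∀ g ∈ E, ¬ Cross f g) : NonCrossing (insert f (E.erase e)) := by
  have hmem : ∀ g ∈ E.erase e, g ∈ E := fun g => mem_of_mem_erase
  intro g hg g' hg'
  rcases mem_insert.1 hg with rfl | hgE <;>
    rcases mem_insert.1 hg' with rfl | hgE'
  · exact not_cross_self _
  · exact hf g' (hmem g' hgE')
  · exact fun h => hf g (hmem g hgE) h.symm
  · exact hE g (hmem g hgE) g' (hmem g' hgE')

lemma next_val_cases (i : Fin n) :
    (i : ℕ) + 1 < n ∧ (next i : ℕ) = i + 1 ∨ (i : ℕ) + 1 = n ∧ (next i : ℕ) = 0 := by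
  rcases (show (i : ℕ) + 1 ≤ n from i.isLt).lt_or_eq with h | h
  · exact Or.inl ⟨h, Nat.mod_eq_of_lt h⟩
  · exact Or.inr ⟨h, by simp [next, h]⟩

lemma next_ne_self [Nontrivial (Fin n)] (i : Fin n) : next i ≠ i := by
  have := Fin.nontrivial_iff_two_le.1 ‹Nontrivial (Fin n)›
  have := next_val_cases i
  omega

lemma next_surjective : Function.Surjective (next : Fin n → Fin n) := by
  refine Finite.surjective_of_injective fun i j hij => ?_
  have := next_val_cases i
  have := next_val_cases j
  omega

lemma IsBorder.not_cross (he : IsBorder e) (f : Edge n) : ¬ Cross e f := by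
  obtain ⟨i, rfl⟩ := he
  refine Sym2.ind (fun a b => ?_) f
  have := next_val_cases i
  simp only [cross_iff, Set.uIoo_eq_union, Set.mem_union, Set.mem_Ioo, Fin.lt_def]
  omega

lemma not_uIoo_iff_uIoo_next (hva : v ≠ a) (hva' : v ≠ next (next a)) (hv : v ≠ next a) :
    ¬ (a ∈ Set.uIoo (next a) v ↔ next (next a) ∈ Set.uIoo (next a) v) := by
  have := next_val_cases a
  have := next_val_cases (next a)
  simp only [Set.uIoo_eq_union, Set.mem_union, Set.mem_Ioo, Fin.lt_def]
  omega

end Crossing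

section PathOrder

variable {n : ℕ} {α : Type*} [LinearOrder α] {r : Fin n ≃ α} {P : Finset (Edge n)}
  {u v a b : Fin n}

/-- Ordering the points by `r` lists them along a Hamiltonian path contained in `P`. The order is
carried by an arbitrary type `α`, so that `αᵒᵈ` describes the reversed path. -/
def Traces (r : Fin n ≃ α) (P : Finset (Edge n)) : Prop :=
  ∀ ⦃u v⦄, r u ⋖ r v → s(u, v) ∈ P

lemma Traces.toDual (hr : Traces r P) : Traces (r.trans OrderDual.toDual) P :=
  fun _ _ h => Sym2.eq_swap ▸ hr h.ofDual

lemma Traces.mem_uIoo_iff_of_covBy (hr : Traces r P) (hP : NonCrossing P) (huv : r u ⋖ r v)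
    (hab : r a ⋖ r b) (h : r v < r a ∨ r b < r u) :
    a ∈ Set.uIoo u v ↔ b ∈ Set.uIoo u v := by
  by_contra hside
  refine hP _ (hr huv) _ (hr hab) (cross_iff.2 ⟨?_, ?_, ?_, ?_, hside⟩) <;>
    refine ne_of_apply_ne r ?_
  · exact h.elim (fun h => (huv.lt.trans h).ne') fun h => (hab.lt.trans h).ne
  · exact h.elim ne_of_gt fun h => ((hab.lt.trans h).trans huv.lt).ne
  · exact h.elim (fun h => ((huv.lt.trans h).trans hab.lt).ne') ne_of_lt
  · exact h.elim (fun h => (h.trans hab.lt).ne') fun h => (h.trans huv.lt).ne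

lemma Traces.mem_uIoo_iff_of_le (hr : Traces r P) (hP : NonCrossing P) (huv : r u ⋖ r v)
    (hab : r a ≤ r b) (h : r v < r a ∨ r b < r u) :
    a ∈ Set.uIoo u v ↔ b ∈ Set.uIoo u v := by
  have := Finite.of_equiv _ r
  have := Fintype.ofFinite α
  let _ : LocallyFiniteOrder α := Fintype.toLocallyFiniteOrder
  suffices hchain : ∀ y, Relation.ReflTransGen (· ⋖ ·) (r a) y → r v < r a ∨ y < r u →
      (a ∈ Set.uIoo u v ↔ r.symm y ∈ Set.uIoo u v) by
    simpa using hchain (r b) (le_iff_reflTransGen_covBy.1 hab) h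
  intro y hay
  induction hay with
  | refl => simp
  | @tail x y hax hxy ih =>
    intro h
    have hle : r a ≤ x := le_iff_reflTransGen_covBy.2 hax
    refine (ih (h.imp_right hxy.lt.trans)).trans (hr.mem_uIoo_iff_of_covBy hP huv ?_ ?_)
    · simpa using hxy
    · simpa using h.imp_left fun h => h.trans_le hle

lemma Traces.mem_uIoo_iff (hr : Traces r P) (hP : NonCrossing P) (huv : r u ⋖ r v)
    (h : r v < r a ∧ r v < r b ∨ r a < r u ∧ r b < r u) :
    a ∈ Set.uIoo u v ↔ b ∈ Set.uIoo u v := by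
  rcases le_total (r a) (r b) with hab | hba
  · exact hr.mem_uIoo_iff_of_le hP huv hab (h.imp And.left And.right)
  · exact (hr.mem_uIoo_iff_of_le hP huv hba (h.imp And.right And.left)).symm

lemma Traces.not_cross_of_le (hr : Traces r P) (hP : NonCrossing P) (huv : r u ⋖ r v)
    (ha : r u ≤ r a) (hb : r u ≤ r b) : ¬ Cross s(u, v) s(a, b) := by
  have hlt : ∀ {p}, r u ≤ r p → p ≠ u → p ≠ v → r v < r p := fun hp hpu hpv =>
    (huv.ge_of_gt (hp.lt_of_ne (r.injective.ne hpu.symm))).lt_of_ne (r.injective.ne hpv.symm)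
  intro h
  obtain ⟨hau, hav, hbu, hbv, hside⟩ := cross_iff.1 h
  exact hside (hr.mem_uIoo_iff hP huv (Or.inl ⟨hlt ha hau hav, hlt hb hbu hbv⟩))

/-- Otherwise both cyclic neighbours of `u` come before `u`, hence lie on the same side of the
path edge leaving `u`, although that edge separates them. -/
lemma Traces.exists_isBorder (hr : Traces r P) (hP : NonCrossing P) (hu : ¬ IsMax (r u)) :
    ∃ p, r u < r p ∧ IsBorder s(u, p) := by
  have := Finite.of_equiv _ r
  obtain ⟨w, huw⟩ := not_isMax_iff.1 hu
  obtain ⟨y, huv, -⟩ := exists_covBy_le_of_lt huw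
  obtain ⟨v, rfl⟩ := r.surjective y
  have hvu : v ≠ u := ne_of_apply_ne r huv.lt.ne'
  have : Nontrivial (Fin n) := ⟨v, u, hvu⟩
  obtain ⟨b, rfl⟩ := next_surjective u
  by_contra! hborder
  have hbefore : ∀ {p}, IsBorder s(next b, p) → p ≠ next b → r p < r (next b) := fun hp hne =>
    (not_lt.1 fun h => hborder _ h hp).lt_of_ne (r.injective.ne hne)
  have hb : r b < r (next b) := hbefore ⟨b, Sym2.eq_swap⟩ (next_ne_self _).symm
  have hb' : r (next (next b)) < r (next b) := hbefore ⟨next b, rfl⟩ (next_ne_self _)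
  refine not_uIoo_iff_uIoo_next ?_ ?_ hvu (hr.mem_uIoo_iff hP huv (Or.inr ⟨hb, hb'⟩))
  · exact ne_of_apply_ne r (hb.trans huv.lt).ne'
  · exact ne_of_apply_ne r (hb'.trans huv.lt).ne'

end PathOrder

section FlipDistance

variable {n : ℕ} {T T' T'' : Finset (Edge n)} {k l : ℕ}

lemma Flip.symm (h : Flip T T') : Flip T' T := by
  obtain ⟨hT, hT', e, he, f, hf, rfl⟩ := h
  refine ⟨hT', hT, f, mem_insert_self _ _, e, ?_, ?_⟩
  · simp [ne_of_mem_of_not_mem he hf]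
  · rw [erase_insert fun h => hf (mem_of_mem_erase h), insert_erase he]

lemma FlipSeq.symm (h : FlipSeq T T' k) : FlipSeq T' T k := by
  obtain ⟨f, h0, hk, hf⟩ := h
  refine ⟨fun i => f (k - i), by simpa using hk, by simpa using h0, fun i hi => ?_⟩
  have hflip := (hf (k - (i + 1)) (by omega)).symm
  rwa [show k - (i + 1) + 1 = k - i by omega] at hflip

lemma FlipSeq.trans (h : FlipSeq T T' k) (h' : FlipSeq T' T'' l) : FlipSeq T T'' (k + l) := by
  obtain ⟨f, h0, hk, hf⟩ := h
  obtain ⟨g, g0, gl, hg⟩ := h'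
  refine ⟨fun i => if i ≤ k then f i else g (i - k), by simpa using h0, ?_, fun i hi => ?_⟩
  · rcases l.eq_zero_or_pos with rfl | hl
    · simpa [hk, ← gl] using g0.symm
    · simpa [hl.ne'] using gl
  · rcases lt_trichotomy i k with hik | rfl | hik
    · simpa [hik.le, Nat.succ_le_of_lt hik] using hf i hik
    · simpa [hk, ← g0] using hg 0 (by omega)
    · have hflip := hg (i - k) (by omega)
      rw [← Nat.sub_add_comm hik.le] at hflip
      simpa [hik.not_ge, (hik.trans (Nat.lt_succ_self i)).not_ge] using hflip

lemma FlipDistLE.refl (T : Finset (Edge n)) (k : ℕ) : FlipDistLE T T k :=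
  ⟨0, k.zero_le, fun _ => T, rfl, rfl, fun _ hi => absurd hi (Nat.not_lt_zero _)⟩

lemma FlipDistLE.symm (h : FlipDistLE T T' k) : FlipDistLE T' T k :=
  let ⟨m, hm, hs⟩ := h
  ⟨m, hm, hs.symm⟩

lemma FlipDistLE.trans (h : FlipDistLE T T' k) (h' : FlipDistLE T' T'' l) :
    FlipDistLE T T'' (k + l) :=
  let ⟨m, hm, hs⟩ := h
  let ⟨m', hm', hs'⟩ := h'
  ⟨m + m', add_le_add hm hm', hs.trans hs'⟩

lemma FlipDistLE.mono (hkl : k ≤ l) (h : FlipDistLE T T' k) : FlipDistLE T T' l :=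
  let ⟨m, hm, hs⟩ := h
  ⟨m, hm.trans hkl, hs⟩

lemma Flip.flipDistLE_one (h : Flip T T') : FlipDistLE T T' 1 :=
  ⟨1, le_rfl, fun i => if i = 0 then T else T', rfl, rfl, fun i hi => by
    simpa [Nat.lt_one_iff.1 hi] using h⟩

lemma NCST.flip_exchange (hT : NCST T) {a b c d : Fin n} (hab : s(a, b) ∈ T)
    (hne : s(c, d) ≠ s(a, b)) (hsep : ¬ Linked (T.erase s(a, b)) c d)
    (hcross : ∀ e ∈ T, ¬ Cross s(c, d) e) : Flip T (insert s(c, d) (T.erase s(a, b))) :=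
  ⟨hT, ⟨hT.1.exchange hab hsep, hT.2.insert_erase hcross⟩, s(a, b), hab, s(c, d),
    fun h => hsep (Linked.of_mem (mem_erase.2 ⟨hne, h⟩)), rfl⟩

end FlipDistance

section LinkedAbove

variable {V α : Type*} [LinearOrder α] {r : V → α} {E : Finset (Sym2 V)} {a b c d u v : V}

/-- The vertices that come after `x` in the order given by `r` lie in one component of `E`. -/
def LinkedAbove (r : V → α) (E : Finset (Sym2 V)) (x : α) : Prop :=
  ∀ ⦃p q⦄, x < r p → x < r q → Linked E p q

lemma exists_separated_of_not_linked [Finite V] (hr : Function.Injective r) (huv : r u < r v)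
    (h : ¬ Linked E u v) :
    ∃ c, r u ≤ r c ∧ (∃ d, r c < r d) ∧ LinkedAbove r E (r c) ∧
      ∀ d, r c < r d → ¬ Linked E c d := by
  classical
  have := Fintype.ofFinite V
  obtain ⟨c, hc, hmax⟩ :=
    (univ.filter fun c => ∃ d, r c < r d ∧ ¬ Linked E c d).exists_max_image r
      ⟨u, by simpa using ⟨v, huv, h⟩⟩
  simp only [mem_filter_univ] at hc hmax
  obtain ⟨d, hcd, hsep⟩ := hc
  have hlt : ∀ p q, r c < r p → r p < r q → Linked E p q := fun p q hp hpq =>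
    by_contra fun h => (hmax p ⟨q, hpq, h⟩).not_gt hp
  have hlink : LinkedAbove r E (r c) := by
    intro p q hp hq
    rcases lt_trichotomy (r p) (r q) with hpq | hpq | hqp
    · exact hlt p q hp hpq
    · exact hr hpq ▸ Linked.refl E p
    · exact (hlt q p hq hqp).symm
  exact ⟨c, hmax u ⟨v, huv, h⟩, ⟨d, hcd⟩, hlink, fun d' hd' h => hsep (h.trans (hlink hd' hcd))⟩

variable [DecidableEq V]

lemma LinkedAbove.exchange {e : Sym2 V} {x : α} (he : LinkedAbove r (E.erase e) x)
    (hbridge : ¬ Linked (E.erase s(a, b)) a b) (hlink : LinkedAbove r (E.erase s(a, b)) (r c))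
    (hcd : r c < r d) (hsep : ¬ Linked (E.erase s(a, b)) c d) (hne : s(c, d) ≠ e) :
    LinkedAbove r ((insert s(c, d) (E.erase s(a, b))).erase e) x := by
  intro p q hp hq
  rw [erase_insert_of_ne hne, erase_right_comm]
  rcases lt_or_ge x (r c) with hx | hx
  · refine (he hx (hx.trans hcd)).exchange (fun h => hsep (h.mono ?_)) (he hp hq)
    exact erase_subset_erase _ (erase_subset _ _)
  · exact (Linked.erase_erase hbridge (he hp hq)
      (hlink (hx.trans_lt hp) (hx.trans_lt hq))).mono (subset_insert _ _)

end LinkedAbove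

section Sweep

variable {n : ℕ} {α : Type*} [LinearOrder α] {r : Fin n ≃ α} {P T T₂ : Finset (Edge n)}
  {U : Set (Fin n)} {a b c d u v w : Fin n}

/-- The neighbours of `w` in `T` that come after `w` in the order given by `r`. -/
def forwardNbrs (r : Fin n ≃ α) (T : Finset (Edge n)) (w : Fin n) : Finset (Fin n) :=
  univ.filter fun v => r w < r v ∧ s(w, v) ∈ T

open Classical in
/-- The forward neighbours of `w` other than its successor in the order given by `r`: each
accounts for an edge that has to be flipped away when `w` is processed. -/
noncomputable def longNbrs (r : Fin n ≃ α) (T : Finset (Edge n)) (w : Fin n) : Finset (Fin n) :=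
  (forwardNbrs r T w).filter fun v => ¬ r w ⋖ r v

/-- A stage in the transformation of `T₂` into the path ordered by `r`. The vertices outside `U`
have been processed: their forward edges are path edges. Any other forward edge is a path edge, an
edge of `T₂`, or was inserted on the way, and then deleting it leaves everything after its first
endpoint linked. -/
structure PartiallySwept (r : Fin n ≃ α) (T₂ : Finset (Edge n)) (U : Set (Fin n))
    (T : Finset (Edge n)) : Prop where
  ncst : NCST T
  edge : ∀ ⦃u v⦄, s(u, v) ∈ T → r u < r v →
    r u ⋖ r v ∨ u ∈ U ∧ (s(u, v) ∈ T₂ ∨ LinkedAbove r (T.erase s(u, v)) (r u))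

lemma mem_forwardNbrs : v ∈ forwardNbrs r T w ↔ r w < r v ∧ s(w, v) ∈ T :=
  mem_filter_univ v

lemma mem_longNbrs : v ∈ longNbrs r T w ↔ r w < r v ∧ s(w, v) ∈ T ∧ ¬ r w ⋖ r v := by
  classical
  rw [longNbrs, mem_filter, mem_forwardNbrs, and_assoc]

lemma longNbrs_exchange_subset (hcd : r c < r d) (hcw : c = w → r c ⋖ r d) :
    longNbrs r (insert s(c, d) (T.erase s(w, v))) w ⊆ (longNbrs r T w).erase v := by
  intro y hy
  obtain ⟨hwy, hmem, hlong⟩ := mem_longNbrs.1 hy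
  rcases mem_insert.1 hmem with h | h
  · rcases Sym2.eq_iff.1 h with ⟨rfl, rfl⟩ | ⟨rfl, rfl⟩
    · exact absurd (hcw rfl) hlong
    · exact absurd hcd hwy.asymm
  · obtain ⟨hne, hT⟩ := mem_erase.1 h
    exact mem_erase.2 ⟨fun h => hne (h ▸ rfl), mem_longNbrs.2 ⟨hwy, hT, hlong⟩⟩

lemma PartiallySwept.exchange (hT : PartiallySwept r T₂ U T)
    (hT' : NCST (insert s(c, d) (T.erase s(a, b)))) (hab : s(a, b) ∈ T) (hcd : r c < r d)
    (hU : r c ⋖ r d ∨ c ∈ U) (hlink : LinkedAbove r (T.erase s(a, b)) (r c))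
    (hsep : ¬ Linked (T.erase s(a, b)) c d) :
    PartiallySwept r T₂ U (insert s(c, d) (T.erase s(a, b))) := by
  refine ⟨hT', fun u v huv hlt => ?_⟩
  by_cases hne : s(c, d) = s(u, v)
  · rcases Sym2.eq_iff.1 hne with ⟨rfl, rfl⟩ | ⟨rfl, rfl⟩
    · refine hU.imp_right fun hU => ⟨hU, Or.inr ?_⟩
      rwa [erase_insert fun h => hsep (Linked.of_mem h)]
    · exact absurd hcd hlt.asymm
  · have hmem := mem_of_mem_erase (mem_of_mem_insert_of_ne huv (Ne.symm hne))
    exact (hT.edge hmem hlt).imp_right <| And.imp_right <| Or.imp_right fun h =>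
      h.exchange (hT.ncst.1.not_linked_erase hab) hlink hcd hsep hne

lemma PartiallySwept.exists_uncrossed (hT : PartiallySwept r T₂ {u | r w ≤ r u} T)
    (hr : Traces r P) (hP : NonCrossing P) (hc : ¬ IsMax (r c)) :
    ∃ d, r c < r d ∧ (∀ e ∈ T, ¬ Cross s(c, d) e) ∧ (c = w → r c ⋖ r d) := by
  by_cases hcw : c = w
  · subst hcw
    have := Finite.of_equiv _ r
    obtain ⟨x, hx⟩ := not_isMax_iff.1 hc
    obtain ⟨y, hcy, -⟩ := exists_covBy_le_of_lt hx
    obtain ⟨d, rfl⟩ := r.surjective y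
    refine ⟨d, hcy.lt, hT.ncst.1.forall_mem_of_lt r fun p q hpq hlt => ?_, fun _ => hcy⟩
    rcases hT.edge hpq hlt with h | ⟨h, -⟩
    · exact hP _ (hr hcy) _ (hr h)
    · exact hr.not_cross_of_le hP hcy h (h.trans hlt.le)
  · obtain ⟨d, hd, hborder⟩ := hr.exists_isBorder hP hc
    exact ⟨d, hd, fun e _ => hborder.not_cross e, fun h => absurd h hcw⟩

/-- The new edge starts at the last vertex `c` that deleting `wv` separates from a later one. -/
lemma PartiallySwept.exists_flip (hT : PartiallySwept r T₂ {u | r w ≤ r u} T)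
    (hr : Traces r P) (hP : NonCrossing P) (hv : v ∈ longNbrs r T w) :
    ∃ T', Flip T T' ∧ PartiallySwept r T₂ {u | r w ≤ r u} T' ∧
      #(longNbrs r T' w) < #(longNbrs r T w) := by
  obtain ⟨hwv, hmem, hlong⟩ := mem_longNbrs.1 hv
  obtain ⟨c, hwc, ⟨x, hcx⟩, hlink, hsep⟩ :=
    exists_separated_of_not_linked r.injective hwv (hT.ncst.1.not_linked_erase hmem)
  obtain ⟨d, hcd, hcross, hcw⟩ := hT.exists_uncrossed hr hP (not_isMax_of_lt hcx)
  have hne : s(c, d) ≠ s(w, v) := by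
    intro h
    rcases Sym2.eq_iff.1 h with ⟨rfl, rfl⟩ | ⟨rfl, rfl⟩
    · exact hlong (hcw rfl)
    · exact hcd.asymm hwv
  have hflip := hT.ncst.flip_exchange hmem hne (hsep d hcd) hcross
  refine ⟨_, hflip, hT.exchange hflip.2.1 hmem hcd (Or.inr hwc) hlink (hsep d hcd), ?_⟩
  exact (card_le_card (longNbrs_exchange_subset hcd hcw)).trans_lt
    (card_erase_lt_of_mem hv)

lemma PartiallySwept.exists_longNbrs_eq_empty (hT : PartiallySwept r T₂ {u | r w ≤ r u} T)
    (hr : Traces r P) (hP : NonCrossing P) :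
    ∃ T', FlipDistLE T T' #(longNbrs r T w) ∧ PartiallySwept r T₂ {u | r w ≤ r u} T' ∧
      longNbrs r T' w = ∅ := by
  induction hk : #(longNbrs r T w) using Nat.strong_induction_on generalizing T with
  | _ k ih =>
    rcases (longNbrs r T w).eq_empty_or_nonempty with hempty | ⟨v, hv⟩
    · exact ⟨T, FlipDistLE.refl T k, hT, hempty⟩
    · obtain ⟨T', hflip, hT', hlt⟩ := hT.exists_flip hr hP hv
      obtain ⟨T'', hdist, hT'', hempty⟩ := ih _ (hk ▸ hlt) hT' rfl
      exact ⟨T'', (hflip.flipDistLE_one.trans hdist).mono (by omega), hT'', hempty⟩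

/-- A long edge at `w` outside `T₂` is the only one: deleting it leaves all later vertices
linked, so a second one would still join `w` to them. -/
lemma PartiallySwept.card_longNbrs_le (hT : PartiallySwept r T₂ U T) (w : Fin n) :
    #(longNbrs r T w) ≤ max #(forwardNbrs r T₂ w) 1 := by
  by_cases hsub : longNbrs r T w ⊆ forwardNbrs r T₂ w
  · exact le_max_of_le_left (card_le_card hsub)
  obtain ⟨v, hv, hv₂⟩ := not_subset.1 hsub
  obtain ⟨hwv, hmem, hlong⟩ := mem_longNbrs.1 hv
  have hlink : LinkedAbove r (T.erase s(w, v)) (r w) :=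
    (((hT.edge hmem hwv).resolve_left hlong).2).resolve_left
      fun h => hv₂ (mem_forwardNbrs.2 ⟨hwv, h⟩)
  suffices honly : longNbrs r T w ⊆ {v} from
    le_max_of_le_right ((card_le_card honly).trans_eq (card_singleton v))
  refine fun y hy => mem_singleton.2 (by_contra fun hyv => ?_)
  obtain ⟨hwy, hy, -⟩ := mem_longNbrs.1 hy
  have hwy' : Linked (T.erase s(w, v)) w y :=
    Linked.of_mem (mem_erase.2 ⟨fun h => hyv (Sym2.congr_right.1 h), hy⟩)
  exact hT.ncst.1.not_linked_erase hmem (hwy'.trans (hlink hwy hwv))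

lemma PartiallySwept.of_longNbrs_eq_empty (hT : PartiallySwept r T₂ {u | r w ≤ r u} T)
    (hempty : longNbrs r T w = ∅) : PartiallySwept r T₂ {u | r w < r u} T := by
  refine ⟨hT.ncst, fun u v huv hlt => or_iff_not_imp_left.2 fun hlong => ?_⟩
  obtain ⟨hwu, horigin⟩ := (hT.edge huv hlt).resolve_left hlong
  refine ⟨(show r w ≤ r u from hwu).lt_of_ne (r.injective.ne ?_), horigin⟩
  rintro rfl
  exact notMem_empty v (hempty ▸ mem_longNbrs.2 ⟨hlt, huv, hlong⟩)

lemma PartiallySwept.exists_sweep_vertex (hT : PartiallySwept r T₂ {u | r w ≤ r u} T)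
    (hr : Traces r P) (hP : NonCrossing P) :
    ∃ T', FlipDistLE T T' (max #(forwardNbrs r T₂ w) 1) ∧
      PartiallySwept r T₂ {u | r w < r u} T' := by
  obtain ⟨T', hdist, hT', hempty⟩ := hT.exists_longNbrs_eq_empty hr hP
  exact ⟨T', hdist.mono (hT.card_longNbrs_le w), hT'.of_longNbrs_eq_empty hempty⟩

lemma exists_partiallySwept_compl (hr : Traces r P) (hP : NonCrossing P) (h₂ : NCST T₂)
    (s : Finset (Fin n)) (hs : ∀ u ∈ s, ∀ v, r v ≤ r u → v ∈ s) :
    ∃ T, FlipDistLE T₂ T (∑ w ∈ s, max #(forwardNbrs r T₂ w) 1) ∧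
      PartiallySwept r T₂ {u | u ∉ s} T := by
  induction s using induction_on_max_value r with
  | empty =>
    exact ⟨T₂, FlipDistLE.refl T₂ _, h₂, fun u v huv _ =>
      Or.inr ⟨notMem_empty u, Or.inl huv⟩⟩
  | insert w s hws hmax ih =>
    have hlt : ∀ u ∈ s, r u < r w := fun u hu =>
      (hmax u hu).lt_of_ne (r.injective.ne (ne_of_mem_of_not_mem hu hws))
    have hmem : ∀ u, u ∈ s ↔ r u < r w := fun u => ⟨hlt u, fun h =>
      mem_of_mem_insert_of_ne (hs w (mem_insert_self w s) u h.le)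
        (ne_of_apply_ne r h.ne)⟩
    obtain ⟨T, hdist, hT⟩ := ih fun u hu v hvu => (hmem v).2 (hvu.trans_lt (hlt u hu))
    simp only [hmem, not_lt] at hT
    obtain ⟨T', hdist', hT'⟩ := hT.exists_sweep_vertex hr hP
    refine ⟨T', ?_, ?_⟩
    · rw [sum_insert hws, add_comm]
      exact hdist.trans hdist'
    · simpa only [mem_insert, hmem, ← r.injective.eq_iff (b := w), ← le_iff_eq_or_lt, not_le]
        using hT'

lemma Traces.flipDistLE (hr : Traces r P) (hP : NCST P) (h₂ : NCST T₂) :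
    FlipDistLE P T₂ (∑ w, max #(forwardNbrs r T₂ w) 1) := by
  obtain ⟨T, hdist, hT⟩ := exists_partiallySwept_compl hr hP.2 h₂ univ fun _ _ v _ => mem_univ v
  have hsub : T ⊆ P := hT.ncst.1.forall_mem_of_lt r fun u v huv hlt =>
    (hT.edge huv hlt).elim (hr ·) fun h => absurd (mem_univ u) h.1
  exact hT.ncst.1.eq_of_subset hP.1 hsub ▸ hdist.symm

end Sweep

section DegreeSum

variable {n : ℕ} {α : Type*} [LinearOrder α]

lemma card_forwardNbrs_add_card_forwardNbrs_toDual (r : Fin n ≃ α) (T : Finset (Edge n))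
    (w : Fin n) [DecidableRel (SimpleGraph.fromEdgeSet (T : Set (Edge n))).Adj] :
    #(forwardNbrs r T w) + #(forwardNbrs (r.trans OrderDual.toDual) T w) =
      (SimpleGraph.fromEdgeSet (T : Set (Edge n))).degree w := by
  rw [← SimpleGraph.card_neighborFinset_eq_degree, ← card_union_of_disjoint]
  · congr 1
    ext v
    simp only [mem_union, mem_forwardNbrs, Equiv.trans_apply, OrderDual.toDual_lt_toDual,
      SimpleGraph.mem_neighborFinset, SimpleGraph.fromEdgeSet_adj, mem_coe]
    rw [← or_and_right, ← ne_iff_lt_or_gt, r.injective.ne_iff, and_comm]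
  · refine disjoint_left.2 fun v hv hv' => ?_
    exact (mem_forwardNbrs.1 hv).1.asymm (OrderDual.toDual_lt_toDual.1 (mem_forwardNbrs.1 hv').1)

lemma IsSpanningTree.sum_max_card_forwardNbrs_le {T : Finset (Edge n)} (hT : IsSpanningTree T)
    (r : Fin n ≃ α) :
    ∑ w, max #(forwardNbrs r T w) 1 +
      ∑ w, max #(forwardNbrs (r.trans OrderDual.toDual) T w) 1 ≤ 3 * n := by
  classical
  have hdeg := card_forwardNbrs_add_card_forwardNbrs_toDual r T
  have hsum := sum_degrees_add_two_of_isTree hT.isTree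
  rw [Fintype.card_fin] at hsum
  obtain ⟨c, hc, hnc, hdeg_pos⟩ : ∃ c ≥ 1, n * c ≤ n + 2 ∧
      ∀ w, 2 ≤ (SimpleGraph.fromEdgeSet (T : Set (Edge n))).degree w + c := by
    rcases subsingleton_or_nontrivial (Fin n) with hn | hn
    · have := Fin.subsingleton_iff_le_one.1 hn
      exact ⟨2, by omega, by omega, fun w => Nat.le_add_left 2 _⟩
    · exact ⟨1, le_rfl, by omega, fun w =>
        Nat.succ_le_succ (hT.1.preconnected.degree_pos_of_nontrivial w)⟩
  calc
    _ = ∑ w, (max #(forwardNbrs r T w) 1 +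
          max #(forwardNbrs (r.trans OrderDual.toDual) T w) 1) := sum_add_distrib.symm
    _ ≤ ∑ w, ((SimpleGraph.fromEdgeSet (T : Set (Edge n))).degree w + c) :=
        sum_le_sum fun w _ => by
          have := hdeg w
          have := hdeg_pos w
          omega
    _ = ∑ w, (SimpleGraph.fromEdgeSet (T : Set (Edge n))).degree w + n * c := by
        rw [sum_add_distrib, Fin.sum_const, smul_eq_mul]
    _ ≤ 3 * n := by omega

end DegreeSum

lemma Traces.of_forall_mem {n : ℕ} {P : Finset (Edge n)} {r : Fin n ≃ Fin n}
    (h : ∀ i : Fin n, (i : ℕ) + 1 < n → s(r.symm i, r.symm (next i)) ∈ P) : Traces r P := by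
  intro u v huv
  have hval : (r u : ℕ) + 1 = r v := Order.covBy_iff_add_one_eq.1 (Fin.covBy_iff.1 huv)
  have hnext : next (r u) = r v := by
    have := next_val_cases (r u)
    omega
  simpa [hnext] using h (r u) (by omega)

/-- If `T₁` is a (non-crossing) Hamiltonian path, there is a flip sequence between
`T₁` and `T₂` of length at most `(3/2) n`. -/
theorem hamiltonian_path_flip {n : ℕ} (T₁ T₂ : Finset (Edge n))
    (h₁ : NCST T₁) (h₂ : NCST T₂)
    (x : Fin n → Fin n) (hx : Function.Bijective x)
    (hham : T₁ = (Finset.univ.filter (fun i : Fin n => (i : ℕ) + 1 < n)).image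
      (fun i => s(x i, x (next i)))) :
    ∃ k : ℕ, FlipSeq T₁ T₂ k ∧ (k : ℝ) ≤ 3 * n / 2 := by
  have hr : Traces (Equiv.ofBijective x hx).symm T₁ := by
    refine Traces.of_forall_mem fun i hi => ?_
    rw [hham]
    exact mem_image_of_mem _ ((mem_filter_univ i).2 hi)
  obtain ⟨k, hk, hseq⟩ := hr.flipDistLE h₁ h₂
  obtain ⟨l, hl, hseq'⟩ := hr.toDual.flipDistLE h₁ h₂
  have hkl : k + l ≤ 3 * n :=
    (add_le_add hk hl).trans (h₂.1.sum_max_card_forwardNbrs_le _)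
  obtain ⟨m, hm, hseq''⟩ : ∃ m, 2 * m ≤ 3 * n ∧ FlipSeq T₁ T₂ m := by
    rcases le_total k l with h | h
    · exact ⟨k, by omega, hseq⟩
    · exact ⟨l, by omega, hseq'⟩
  refine ⟨m, hseq'', ?_⟩
  rw [le_div_iff₀' two_pos]
  exact_mod_cast hm
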